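/- Let 𝒞 be a small category, (−⊗I) elementary homotopy data on Psh(𝒞), and T a monad on Psh(𝒞) satisfying (M1)–(M3). Let 𝔚' be any collection of maps in Psh(𝒞) such that: (i) 𝔚' has the three-for-two property (for composable maps f and g, if any two of f, g, g∘f lie in 𝔚', so does the third); (ii) 𝔚' contains every homotopy equivalence (every f : X → Y for which there exists f' : Y → X with f' ∘ f ≃* id_X and f ∘ f' ≃* id_Y); and (iii) 𝔚' contains every unit η_X : X → TX. Then every T-weak equivalence belongs to 𝔚'. -/

import Mathlib

open CategoryTheory Category Limits

universe w v u

/-- The category of presheaves on a small category. -/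
abbrev Psh (C : Type u) [SmallCategory C] := Cᵒᵖ ⥤ Type u

namespace PaperMSMonad

/-- `f` is a retract of `g` in the arrow category. -/
def IsRetractOf {D : Type*} [Category D] {X Y Z W : D} (f : X ⟶ Y) (g : Z ⟶ W) : Prop :=
  ∃ (i : X ⟶ Z) (r : Z ⟶ X) (i' : Y ⟶ W) (r' : W ⟶ Y),
    i ≫ r = 𝟙 X ∧ i' ≫ r' = 𝟙 Y ∧ i ≫ g = f ≫ i' ∧ g ≫ r' = r ≫ f

/-- The cocone on the restriction of `F : J ⥤ D` to `Set.Iio j`, with point `F.obj j`. -/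
@[simps]
def coconeLT {D : Type*} [Category D] {J : Type w} [Preorder J] (F : J ⥤ D) (j : J) :
    Cocone ((Monotone.functor (f := (Subtype.val : Set.Iio j → J))
      (fun _ _ h => h)) ⋙ F) where
  pt := F.obj j
  ι :=
    { app := fun i => F.map (homOfLE i.2.le)
      naturality := fun i i' g => by
        dsimp [Monotone.functor]
        rw [Category.comp_id, ← F.map_comp]
        rfl }

/-- A morphism property is stable under transfinite composition if, for every well-ordered
type `J`, every functor `F : J ⥤ D` which is continuous at limit stages and whose successor
maps all lie in `W`, and every colimit cocone on `F`, the component of the cocone at the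
bottom element lies in `W`. -/
def StableUnderTransfiniteComposition {D : Type*} [Category D]
    (W : MorphismProperty D) : Prop :=
  ∀ (J : Type w) (_ : LinearOrder J) (_ : SuccOrder J) (_ : OrderBot J) (_ : WellFoundedLT J)
    (F : J ⥤ D),
    (∀ (j : J), ¬IsMax j → W (F.map (homOfLE (Order.le_succ j)))) →
    (∀ (j : J), Order.IsSuccLimit j → Nonempty (IsColimit (coconeLT F j))) →
    ∀ (c : Cocone F), Nonempty (IsColimit c) → W (c.ι.app ⊥)

/-- A class of morphisms is weakly saturated if it contains all isomorphisms and is closed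
under pushout (cobase change), retracts and transfinite composition. -/
def IsWeaklySaturated {D : Type*} [Category D] (W : MorphismProperty D) : Prop :=
  (∀ ⦃X Y : D⦄ (f : X ⟶ Y), IsIso f → W f) ∧
  (∀ ⦃Z X Y P : D⦄ (t : Z ⟶ X) (f : Z ⟶ Y) (g : X ⟶ P) (b : Y ⟶ P),
      IsPushout t f g b → W f → W g) ∧
  (∀ ⦃X Y Z W' : D⦄ (f : X ⟶ Y) (g : Z ⟶ W'), IsRetractOf f g → W g → W f) ∧
  StableUnderTransfiniteComposition.{w} W

/-- The saturated class generated by `S`: the smallest weakly saturated class containing `S`. -/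
def SaturatedClassGen {D : Type*} [Category D] (S : MorphismProperty D) :
    MorphismProperty D :=
  fun _ _ f => ∀ W : MorphismProperty D, IsWeaklySaturated.{w} W → S ≤ W → W f

/-- The maps having the right lifting property with respect to all maps in `S`. -/
def RLP {D : Type*} [Category D] (S : MorphismProperty D) : MorphismProperty D :=
  fun _ _ g => ∀ ⦃A B : D⦄ (f : A ⟶ B), S f → HasLiftingProperty f g

/-- The maps having the left lifting property with respect to all maps in `S`. -/
def LLP {D : Type*} [Category D] (S : MorphismProperty D) : MorphismProperty D :=
  fun _ _ f => ∀ ⦃A B : D⦄ (g : A ⟶ B), S g → HasLiftingProperty f g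

end PaperMSMonad

namespace PaperMSMonad

variable {C : Type u} [SmallCategory C]

/-- Elementary homotopy data on the category of presheaves on `C`: a functorial cylinder
`X ↦ X ⊗ I` with endpoint inclusions `∂⁰`, `∂¹` and projection `σ`, such that
`[∂⁰,∂¹] : X + X → X ⊗ I` is always a monomorphism, the cylinder functor preserves small
colimits and monomorphisms, and the endpoint naturality squares at monomorphisms
are pullbacks. -/
structure ElementaryHomotopyData (C : Type u) [SmallCategory C] where
  cyl : Psh C ⥤ Psh C
  d0 : 𝟭 (Psh C) ⟶ cyl
  d1 : 𝟭 (Psh C) ⟶ cyl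
  σ : cyl ⟶ 𝟭 (Psh C)
  d0_σ : ∀ X : Psh C, d0.app X ≫ σ.app X = 𝟙 X
  d1_σ : ∀ X : Psh C, d1.app X ≫ σ.app X = 𝟙 X
  mono_pair : ∀ X : Psh C, Mono (coprod.desc (d0.app X) (d1.app X))
  preservesColimits : PreservesColimitsOfSize.{u, u} cyl
  preservesMono : ∀ ⦃K L : Psh C⦄ (j : K ⟶ L), Mono j → Mono (cyl.map j)
  isPullback0 : ∀ ⦃K L : Psh C⦄ (j : K ⟶ L), Mono j →
    IsPullback j (d0.app K) (d0.app L) (cyl.map j)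
  isPullback1 : ∀ ⦃K L : Psh C⦄ (j : K ⟶ L), Mono j →
    IsPullback j (d1.app K) (d1.app L) (cyl.map j)

namespace ElementaryHomotopyData

variable (E : ElementaryHomotopyData C)

/-- `f ≃ g`: there is a homotopy `θ : X ⊗ I ⟶ Y` from `f` to `g`. -/
def Htpy {X Y : Psh C} (f g : X ⟶ Y) : Prop :=
  ∃ θ : E.cyl.obj X ⟶ Y, E.d0.app X ≫ θ = f ∧ E.d1.app X ≫ θ = g

/-- `f ≃* g`: the equivalence relation generated by the homotopy relation. -/
def HtpyStar {X Y : Psh C} (f g : X ⟶ Y) : Prop :=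
  Relation.EqvGen (fun a b : X ⟶ Y => E.Htpy a b) f g

/-- `[X,Y]`: the quotient of `Hom(X,Y)` by the equivalence relation generated by homotopy. -/
def HQ (X Y : Psh C) :=
  Quot (fun a b : X ⟶ Y => E.Htpy a b)

/-- The class of `f : X ⟶ Y` in `[X,Y]`. -/
def HQ.mk {X Y : Psh C} (f : X ⟶ Y) : E.HQ X Y :=
  Quot.mk _ f

/-- `[f,A] : [Y,A] → [X,A]`, precomposition with `f` on homotopy classes. -/
def precomp {X Y A : Psh C} (f : X ⟶ Y) : E.HQ Y A → E.HQ X A :=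
  Quot.lift (fun h => HQ.mk E (f ≫ h)) (fun h h' hh => Quot.sound (by
    obtain ⟨θ, h0, h1⟩ := hh
    exact ⟨E.cyl.map f ≫ θ,
      by rw [← Category.assoc, ← E.d0.naturality, Functor.id_map, Category.assoc, h0],
      by rw [← Category.assoc, ← E.d1.naturality, Functor.id_map, Category.assoc, h1]⟩))

/-- For a monomorphism `j : K ⟶ L` the canonical map `K⊗I ∪ L⊗{0} ⟶ L⊗I`. -/
noncomputable def gluing0 {K L : Psh C} (j : K ⟶ L) :
    pushout (E.d0.app K) j ⟶ E.cyl.obj L :=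
  pushout.desc (E.cyl.map j) (E.d0.app L) (by rw [← E.d0.naturality j]; rfl)

/-- For a monomorphism `j : K ⟶ L` the canonical map `K⊗I ∪ L⊗{1} ⟶ L⊗I`. -/
noncomputable def gluing1 {K L : Psh C} (j : K ⟶ L) :
    pushout (E.d1.app K) j ⟶ E.cyl.obj L :=
  pushout.desc (E.cyl.map j) (E.d1.app L) (by rw [← E.d1.naturality j]; rfl)

/-- For a map `j : K ⟶ L` the canonical map `K⊗I ∪ L⊗∂I ⟶ L⊗I`. -/
noncomputable def gluingBoth {K L : Psh C} (j : K ⟶ L) :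
    pushout (coprod.desc (E.d0.app K) (E.d1.app K)) (coprod.map j j) ⟶ E.cyl.obj L :=
  pushout.desc (E.cyl.map j) (coprod.desc (E.d0.app L) (E.d1.app L)) (by
    apply coprod.hom_ext
    · rw [coprod.inl_desc_assoc, coprod.inl_map_assoc, coprod.inl_desc]
      exact (E.d0.naturality j).symm
    · rw [coprod.inr_desc_assoc, coprod.inr_map_assoc, coprod.inr_desc]
      exact (E.d1.naturality j).symm)

/-- The class `Λ⁰_I(S)`. -/
inductive Lambda0 (E : ElementaryHomotopyData C) (S : MorphismProperty (Psh C)) :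
    ∀ ⦃X Y : Psh C⦄, (X ⟶ Y) → Prop
  | ofS ⦃X Y : Psh C⦄ (f : X ⟶ Y) : S f → Lambda0 E S f
  | glue0 ⦃K L : Psh C⦄ (j : K ⟶ L) : Mono j → Lambda0 E S (E.gluing0 j)
  | glue1 ⦃K L : Psh C⦄ (j : K ⟶ L) : Mono j → Lambda0 E S (E.gluing1 j)

/-- The operation `𝚲(-)` applied to a class of maps. -/
inductive LambdaStep (E : ElementaryHomotopyData C) (P : MorphismProperty (Psh C)) :
    ∀ ⦃X Y : Psh C⦄, (X ⟶ Y) → Prop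
  | glue ⦃K L : Psh C⦄ (j : K ⟶ L) : P j → LambdaStep E P (E.gluingBoth j)

/-- The class `Λⁿ_I(S)`. -/
def LambdaN (S : MorphismProperty (Psh C)) : ℕ → MorphismProperty (Psh C)
  | 0 => Lambda0 E S
  | (n + 1) => LambdaStep E (LambdaN S n)

/-- The class `Λ_I(S) = ⋃ₙ Λⁿ_I(S)`. -/
def Lambda (S : MorphismProperty (Psh C)) : MorphismProperty (Psh C) :=
  fun _ _ f => ∃ n : ℕ, LambdaN E S n f

/-- The class `𝔄_I(S)` of anodyne extensions: maps with the left lifting property with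
respect to every map having the right lifting property with respect to `Λ_I(S)`. -/
def Anodyne (S : MorphismProperty (Psh C)) : MorphismProperty (Psh C) :=
  LLP (RLP (E.Lambda S))

/-- `A` is naively fibrant if `A ⟶ 1` has the right lifting property with respect to all
anodyne extensions. -/
def NaivelyFibrant (S : MorphismProperty (Psh C)) (A : Psh C) : Prop :=
  RLP (E.Anodyne S) (terminal.from A)

/-- A map `f : X ⟶ Y` is a `T`-weak equivalence if `[f,A] : [Y,A] → [X,A]` is a bijection
for every `T`-algebra `A`. -/
def TWeakEquiv (T : Monad (Psh C)) : MorphismProperty (Psh C) :=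
  fun _ _ f => ∀ A : T.Algebra, Function.Bijective (E.precomp (A := A.A) f)

end ElementaryHomotopyData

/-- The generating set of units `𝔊 = {η_{Gⁱ} : Gⁱ ⟶ T(Gⁱ)}`. -/
inductive unitsOf (T : Monad (Psh C)) {ι : Type u} (G : ι → Psh C) :
    ∀ ⦃X Y : Psh C⦄, (X ⟶ Y) → Prop
  | mk (i : ι) : unitsOf T G (T.η.app (G i))

end PaperMSMonad

namespace PaperMSMonad

open CategoryTheory Category Limits

/-- Maps with the left lifting property against a fixed map form a weakly saturated class. -/
theorem isWeaklySaturated_lift {D : Type*} [Category D] {A B : D} (p : A ⟶ B) :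
    IsWeaklySaturated.{w} (fun _ _ f => HasLiftingProperty f p : MorphismProperty D) := by
  refine ⟨fun X Y f hf => ?_, fun Z X Y P t f g b h hf => ?_, fun X Y Z W' f g h hg => ?_, ?_⟩
  · have := hf
    infer_instance
  · have : HasLiftingProperty f p := hf
    exact h.hasLiftingProperty p
  · obtain ⟨i, r, i', r', h1, h2, h3, h4⟩ := h
    have : HasLiftingProperty g p := hg
    refine ⟨fun {x y} sq => ⟨⟨⟨i' ≫ (CommSq.lift (f := r ≫ x) (i := g) (p := p) (g := r' ≫ y)
      ⟨?_⟩), ?_, ?_⟩⟩⟩⟩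
    · rw [Category.assoc, sq.w, ← Category.assoc, ← h4, Category.assoc]
    · rw [← Category.assoc, ← h3, Category.assoc, CommSq.fac_left, ← Category.assoc, h1,
        Category.id_comp]
    · rw [Category.assoc, CommSq.fac_right, ← Category.assoc, h2, Category.id_comp]
  · intro J _ _ _ _ F hF hlim c hc
    have : F.IsWellOrderContinuous := ⟨fun m hm => hlim m hm⟩
    exact HasLiftingProperty.transfiniteComposition.hasLiftingProperty_ι_app_bot
      (hc := hc.some) (fun j hj => hF j hj)

namespace ElementaryHomotopyData

/-- Relative homotopy extension for `j` with target `A`. -/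
def Ext {C : Type u} [SmallCategory C] (E : ElementaryHomotopyData C) (A : Psh C)
    {K L : Psh C} (j : K ⟶ L) : Prop :=
  ∀ (a : E.cyl.obj K ⟶ A) (b c : L ⟶ A), E.d0.app K ≫ a = j ≫ b → E.d1.app K ≫ a = j ≫ c →
    ∃ θ : E.cyl.obj L ⟶ A, E.cyl.map j ≫ θ = a ∧ E.d0.app L ≫ θ = b ∧ E.d1.app L ≫ θ = c

theorem ext_iff {C : Type u} [SmallCategory C] (E : ElementaryHomotopyData C) (A : Psh C) :
    ∃ (R : Psh C) (p : R ⟶ A ⨯ A), ∀ ⦃K L : Psh C⦄ (j : K ⟶ L),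
      E.Ext A j ↔ HasLiftingProperty j p := by
  have := E.preservesColimits
  have : E.cyl.IsLeftAdjoint := Presheaf.isLeftAdjoint_of_preservesColimits.{u} E.cyl
  let adj := Adjunction.ofIsLeftAdjoint E.cyl
  let R := E.cyl.rightAdjoint.obj A
  let ε : E.cyl.obj R ⟶ A := adj.counit.app A
  have key0 : ∀ {K : Psh C} (k : K ⟶ R),
      k ≫ E.d0.app R ≫ ε = E.d0.app K ≫ E.cyl.map k ≫ ε := fun {K} k => by
    have := E.d0.naturality k
    simp only [Functor.id_map] at this
    rw [← Category.assoc, ← Category.assoc, this]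
  have key1 : ∀ {K : Psh C} (k : K ⟶ R),
      k ≫ E.d1.app R ≫ ε = E.d1.app K ≫ E.cyl.map k ≫ ε := fun {K} k => by
    have := E.d1.naturality k
    simp only [Functor.id_map] at this
    rw [← Category.assoc, ← Category.assoc, this]
  have hex : ∀ {K : Psh C} (a : E.cyl.obj K ⟶ A), ∃ k : K ⟶ R, E.cyl.map k ≫ ε = a :=
    fun {K} a => ⟨adj.homEquiv _ _ a, by
      have := (adj.homEquiv _ _).symm_apply_apply a
      rwa [Adjunction.homEquiv_counit] at this⟩
  have hinj : ∀ {K : Psh C} (k k' : K ⟶ R), E.cyl.map k ≫ ε = E.cyl.map k' ≫ ε → k = k' :=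
    fun {K} k k' h => by
      apply (adj.homEquiv _ _).symm.injective
      rw [Adjunction.homEquiv_counit, Adjunction.homEquiv_counit]
      exact h
  refine ⟨R, prod.lift (E.d0.app R ≫ ε) (E.d1.app R ≫ ε), fun K L j => ⟨fun h => ?_, fun h => ?_⟩⟩
  · refine ⟨fun {x y} sq => ?_⟩
    have w0 := congrArg (· ≫ prod.fst) sq.w
    have w1 := congrArg (· ≫ prod.snd) sq.w
    simp only [Category.assoc, prod.lift_fst, prod.lift_snd] at w0 w1
    obtain ⟨θ, h0, h1, h2⟩ := h (E.cyl.map x ≫ ε) (y ≫ prod.fst) (y ≫ prod.snd)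
      (by rw [← key0]; exact w0) (by rw [← key1]; exact w1)
    obtain ⟨l, rfl⟩ := hex θ
    refine ⟨⟨⟨l, ?_, ?_⟩⟩⟩
    · apply hinj
      rw [Functor.map_comp, Category.assoc, h0]
    · apply Limits.prod.hom_ext
      · rw [Category.assoc, prod.lift_fst, key0, h1]
      · rw [Category.assoc, prod.lift_snd, key1, h2]
  · intro a b c hb hc
    obtain ⟨k, rfl⟩ := hex a
    have sq : CommSq k j (prod.lift (E.d0.app R ≫ ε) (E.d1.app R ≫ ε)) (prod.lift b c) := ⟨by
      apply Limits.prod.hom_ext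
      · simp only [Category.assoc, prod.lift_fst]
        rw [key0, hb]
      · simp only [Category.assoc, prod.lift_snd]
        rw [key1, hc]⟩
    refine ⟨E.cyl.map sq.lift ≫ ε, ?_, ?_, ?_⟩
    · rw [← Category.assoc, ← Functor.map_comp, sq.fac_left]
    · have e := congrArg (· ≫ prod.fst) sq.fac_right
      simp only [Category.assoc, prod.lift_fst] at e
      rw [← key0]
      exact e
    · have e := congrArg (· ≫ prod.snd) sq.fac_right
      simp only [Category.assoc, prod.lift_snd] at e
      rw [← key1]
      exact e

theorem ext_of_gluingBoth {C : Type u} [SmallCategory C] (E : ElementaryHomotopyData C)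
    (A : Psh C) {K L : Psh C} (j : K ⟶ L)
    (h : HasLiftingProperty (E.gluingBoth j) (terminal.from A)) : E.Ext A j := by
  intro a b c hb hc
  have hw : coprod.desc (E.d0.app K) (E.d1.app K) ≫ a = coprod.map j j ≫ coprod.desc b c := by
    apply coprod.hom_ext
    · rw [coprod.inl_desc_assoc, coprod.inl_map_assoc, coprod.inl_desc]
      exact hb
    · rw [coprod.inr_desc_assoc, coprod.inr_map_assoc, coprod.inr_desc]
      exact hc
  have sq : CommSq (pushout.desc a (coprod.desc b c) hw) (E.gluingBoth j) (terminal.from A)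
    (terminal.from _) := ⟨by apply terminal.hom_ext⟩
  have e := sq.fac_left
  have e1 := congrArg (pushout.inl _ _ ≫ ·) e
  have e2 := congrArg (fun t => coprod.inl ≫ pushout.inr _ _ ≫ t) e
  have e3 := congrArg (fun t => coprod.inr ≫ pushout.inr _ _ ≫ t) e
  simp only [gluingBoth, pushout.inl_desc, pushout.inl_desc_assoc, pushout.inr_desc,
    pushout.inr_desc_assoc, coprod.inl_desc, coprod.inr_desc, coprod.inl_desc_assoc,
    coprod.inr_desc_assoc] at e1 e2 e3
  exact ⟨sq.lift, e1, e2, e3⟩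

theorem htpyStar_comp {C : Type u} [SmallCategory C] (E : ElementaryHomotopyData C)
    {X Y Z : Psh C} {f g : X ⟶ Y} (k : Y ⟶ Z) (h : E.HtpyStar f g) :
    E.HtpyStar (f ≫ k) (g ≫ k) := by
  induction h with
  | rel x y h =>
    obtain ⟨θ, rfl, rfl⟩ := h
    exact .rel _ _ ⟨θ ≫ k, by rw [Category.assoc], by rw [Category.assoc]⟩
  | refl x => exact .refl _
  | symm x y _ ih => exact .symm _ _ ih
  | trans x y z _ _ h1 h2 => exact .trans _ _ _ h1 h2

/-- Extension of homotopy zigzags along a map `j`. -/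
theorem htpyStar_extend {C : Type u} [SmallCategory C] (E : ElementaryHomotopyData C)
    {A K L : Psh C} (j : K ⟶ L) (hj : E.Ext A j) (hext : ∀ g : K ⟶ A, ∃ g' : L ⟶ A, j ≫ g' = g)
    {g g' : K ⟶ A} (h : E.HtpyStar g g') :
    ∀ b c : L ⟶ A, j ≫ b = g → j ≫ c = g' → E.HtpyStar b c := by
  induction h with
  | rel x y h =>
    intro b c hb hc
    obtain ⟨θ, h0, h1⟩ := h
    obtain ⟨ψ, -, h3, h4⟩ := hj θ b c (h0.trans hb.symm) (h1.trans hc.symm)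
    exact .rel _ _ ⟨ψ, h3, h4⟩
  | refl x =>
    intro b c hb hc
    have e0 : E.d0.app K ≫ E.σ.app K ≫ x = x := by
      rw [← Category.assoc, E.d0_σ]; exact Category.id_comp x
    have e1 : E.d1.app K ≫ E.σ.app K ≫ x = x := by
      rw [← Category.assoc, E.d1_σ]; exact Category.id_comp x
    obtain ⟨ψ, -, h3, h4⟩ := hj (E.σ.app K ≫ x) b c (e0.trans hb.symm) (e1.trans hc.symm)
    exact .rel _ _ ⟨ψ, h3, h4⟩
  | symm x y _ ih => exact fun b c hb hc => .symm _ _ (ih c b hc hb)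
  | trans x y z _ _ h1 h2 =>
    intro b c hb hc
    obtain ⟨m, hm⟩ := hext y
    exact .trans _ _ _ (h1 b m hb hm) (h2 m c hm hc)

theorem mk_eq_iff {C : Type u} [SmallCategory C] (E : ElementaryHomotopyData C)
    {X Y : Psh C} (f g : X ⟶ Y) : HQ.mk E f = HQ.mk E g ↔ E.HtpyStar f g :=
  Quot.eq

end ElementaryHomotopyData

theorem unit_bijective {C : Type u} [SmallCategory C]
    (E : ElementaryHomotopyData C) (T : Monad (Psh C)) {ι : Type u} (G : ι → Psh C)
    (hM2 : ∀ X : Psh C, SaturatedClassGen.{u} (unitsOf T G) (T.η.app X))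
    (hM3 : ∀ A : T.Algebra, E.NaivelyFibrant (unitsOf T G) A.A)
    (X : Psh C) : E.TWeakEquiv T (T.η.app X) := by
  intro A
  have hext : ∀ g : X ⟶ A.A, ∃ g' : T.toFunctor.obj X ⟶ A.A, T.η.app X ≫ g' = g := fun g =>
    ⟨T.toFunctor.map g ≫ A.a, by
      have := T.η.naturality g
      simp only [Functor.id_map] at this
      rw [← Category.assoc, ← this, Category.assoc, A.unit]
      exact Category.comp_id g⟩
  have hE : E.Ext A.A (T.η.app X) := by
    obtain ⟨R, p, hp⟩ := E.ext_iff A.A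
    rw [hp]
    refine hM2 X (fun _ _ f => HasLiftingProperty f p) (isWeaklySaturated_lift p) ?_
    intro _ _ f hf
    refine (hp f).1 (E.ext_of_gluingBoth _ _ ?_)
    apply hM3 A
    intro _ _ g hg
    exact hg _ ⟨1, .glue _ (.ofS _ hf)⟩
  constructor
  · rintro ⟨b⟩ ⟨c⟩ h
    exact (E.mk_eq_iff b c).2 (E.htpyStar_extend _ hE hext ((E.mk_eq_iff _ _).1 h) b c rfl rfl)
  · rintro ⟨g⟩
    obtain ⟨g', hg⟩ := hext g
    exact ⟨ElementaryHomotopyData.HQ.mk E g', congrArg (ElementaryHomotopyData.HQ.mk E) hg⟩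

/-- Proposition: under (M1)-(M3), the class of `T`-weak equivalences is the least class
with the three-for-two property containing the homotopy equivalences and the units. -/
theorem tWeakEquiv_minimal {C : Type u} [SmallCategory C]
    (E : ElementaryHomotopyData C) (T : Monad (Psh C))
    (hM1a : ∀ ⦃K L : Psh C⦄ (j : K ⟶ L), CategoryTheory.Mono j →
      CategoryTheory.Mono (T.toFunctor.map j))
    (hM1b : ∀ X : Psh C, CategoryTheory.Mono (T.η.app X))
    {ι : Type u} (G : ι → Psh C)
    (hM2 : ∀ X : Psh C, SaturatedClassGen.{u} (unitsOf T G) (T.η.app X))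
    (hM3 : ∀ A : T.Algebra, E.NaivelyFibrant (unitsOf T G) A.A)
    (W' : MorphismProperty (Psh C))
    (h32_comp : ∀ ⦃X Y Z : Psh C⦄ (f : X ⟶ Y) (g : Y ⟶ Z), W' f → W' g → W' (f ≫ g))
    (h32_left : ∀ ⦃X Y Z : Psh C⦄ (f : X ⟶ Y) (g : Y ⟶ Z), W' g → W' (f ≫ g) → W' f)
    (h32_right : ∀ ⦃X Y Z : Psh C⦄ (f : X ⟶ Y) (g : Y ⟶ Z), W' f → W' (f ≫ g) → W' g)
    (hhe : ∀ ⦃X Y : Psh C⦄ (f : X ⟶ Y),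
        (∃ f' : Y ⟶ X, E.HtpyStar (f ≫ f') (𝟙 X) ∧ E.HtpyStar (f' ≫ f) (𝟙 Y)) → W' f)
    (hunits : ∀ X : Psh C, W' (T.η.app X)) :
    E.TWeakEquiv T ≤ W' := by
  intro X Y f hf
  have nat : f ≫ T.η.app Y = T.η.app X ≫ T.toFunctor.map f := T.η.naturality f
  have hTf : E.TWeakEquiv T (T.toFunctor.map f) := by
    intro A
    have hX := unit_bijective E T G hM2 hM3 X A
    have hY := unit_bijective E T G hM2 hM3 Y A
    have hc : E.precomp (A := A.A) (T.η.app X) ∘ E.precomp (T.toFunctor.map f) =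
        E.precomp f ∘ E.precomp (T.η.app Y) := by
      funext q
      obtain ⟨q⟩ := q
      refine congrArg (ElementaryHomotopyData.HQ.mk E) ?_
      rw [← Category.assoc, ← nat]
      exact Category.assoc f (T.η.app Y) q
    have hb := (hf A).comp hY
    rw [← hc] at hb
    exact (Function.Bijective.of_comp_iff' hX _).1 hb
  refine h32_left f (T.η.app Y) (hunits Y) ?_
  rw [nat]
  refine h32_comp _ _ (hunits X) (hhe _ ?_)
  obtain ⟨⟨g : T.toFunctor.obj Y ⟶ T.toFunctor.obj X⟩, hg⟩ :=
    (hTf (T.free.obj X)).2 (ElementaryHomotopyData.HQ.mk E (𝟙 _))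
  have hg1 : E.HtpyStar (T.toFunctor.map f ≫ g) (𝟙 _) := (E.mk_eq_iff _ _).1 hg
  refine ⟨g, hg1, ?_⟩
  refine (E.mk_eq_iff _ _).1 ((hTf (T.free.obj Y)).1 ?_)
  refine (E.mk_eq_iff (T.toFunctor.map f ≫ g ≫ T.toFunctor.map f)
    (T.toFunctor.map f ≫ 𝟙 _)).2 ?_
  have := E.htpyStar_comp (T.toFunctor.map f) hg1
  have e1 : (T.toFunctor.map f ≫ g) ≫ T.toFunctor.map f =
      T.toFunctor.map f ≫ g ≫ T.toFunctor.map f := Category.assoc _ _ _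
  rw [← e1, Category.comp_id]
  rw [Category.id_comp] at this
  exact this

end PaperMSMonad
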